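/- For every a ∈ (0, π/2) and all x, y ∈ S² with x ≠ y, letting B(x,a) and B(y,a) be the spherical caps of geodesic radius a centered at x and y, one has (1/σ(B(x,a))²)·∫_{B(x,a)}∫_{B(y,a)} log(1/|u − v|) dσ(u)dσ(v) ≤ log(1/|x − y|) + 1 + 2·cot²(a/2)·log cos(a/2). -/

import Mathlib

open MeasureTheory Real Filter Set

noncomputable section

/-- Euclidean 3-space. -/
abbrev E3 : Type := EuclideanSpace ℝ (Fin 3)

/-- The unit sphere `S²` = {x ∈ ℝ³ : |x| = 1}. -/
abbrev S2 : Type := Metric.sphere (0 : E3) 1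

/-- Surface measure on `S²`. -/
noncomputable def surf : Measure S2 := (volume : Measure E3).toSphere

/-- The normalized surface (uniform probability) measure `σ` on `S²`. -/
noncomputable def sigma2 : Measure S2 := (surf Set.univ)⁻¹ • surf

instance : IsFiniteMeasure sigma2 := by
  constructor
  rw [sigma2]
  simp only [Measure.smul_apply, smul_eq_mul]
  exact lt_of_le_of_lt (ENNReal.inv_mul_le_one _) ENNReal.one_lt_top

/-- The geodesic (great-circle) distance on `S²`. -/
noncomputable def dg (x y : S2) : ℝ := Real.arccos (inner (𝕜 := ℝ) (x : E3) (y : E3))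

/-- The spherical cap `B(x,a) = {y ∈ S² : d_g(x,y) ≤ a}`. -/
def cap (x : S2) (a : ℝ) : Set S2 := {y | dg x y ≤ a}

/-!
Rotations about `x` preserve `σ` and the cap `B(x, a)`, so in the potential at `v` of a measure `μ`
with this symmetry, `log (1 / |v - u|)` may be averaged over the rotations of `u` about `x`. Under
the rotation by the unit complex number `z`, this distance is `|β z + α|` with
`α = |x - v| |u + x| / 2`, and by Jensen's formula `log |β z + α|` has mean at least `log α` on the
unit circle. For a probability measure `μ` this gives
`U_μ(v) ≤ log (1 / |x - v|) + U_μ(-x) + log 2`.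

By Archimedes' theorem the height `⟪x, u⟫` is uniformly distributed on `[-1, 1]`, and for the
uniform measure on the cap one computes `U(-x) + log 2 = 1/2 + cot² (a/2) log cos (a/2)`. Using the
inequality once for each of the two caps replaces both by point masses.
-/

open Module (finrank)

open scoped RealInnerProductSpace Pointwise

/-- Three-space split as an axis `ℝ` and the complex plane `ℂ` orthogonal to it; rotations about
the axis are complex multiplications on the second factor. -/
abbrev AxialSpace : Type := WithLp 2 (ℝ × ℂ)

lemma map_norm_sq_volume_complex :
    (volume : Measure ℂ).map (fun w ↦ ‖w‖ ^ 2) = ENNReal.ofReal π • volume.restrict (Ici 0) := by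
  have hIic (b : ℝ) : (volume : Measure ℂ).map (fun w ↦ ‖w‖ ^ 2) (Iic b) =
      ENNReal.ofReal π * ENNReal.ofReal b := by
    rw [Measure.map_apply (by fun_prop) measurableSet_Iic]
    rcases lt_or_ge b 0 with hb | hb
    · have : (fun w : ℂ ↦ ‖w‖ ^ 2) ⁻¹' Iic b = ∅ :=
        eq_empty_of_forall_notMem fun w hw ↦ (hb.trans_le (sq_nonneg ‖w‖)).not_ge hw
      simp [this, ENNReal.ofReal_of_nonpos hb.le]
    · have : (fun w : ℂ ↦ ‖w‖ ^ 2) ⁻¹' Iic b = Metric.closedBall 0 √b := by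
        ext w
        simp [Real.le_sqrt (norm_nonneg w) hb]
      rw [this, Complex.volume_closedBall, ← ENNReal.ofReal_pow (Real.sqrt_nonneg b),
        Real.sq_sqrt hb, mul_comm, ← NNReal.coe_real_pi, ENNReal.ofReal_coe_nnreal]
  refine Measure.ext_of_generateFrom_of_iUnion (range Iic) (fun n : ℕ ↦ Iic (n : ℝ))
    (borel_eq_generateFrom_Iic ℝ ▸ BorelSpace.measurable_eq) isPiSystem_Iic
    (iUnion_eq_univ_iff.2 exists_nat_ge) (fun n ↦ mem_range_self _) (fun n ↦ ?_) ?_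
  · rw [hIic]
    finiteness
  · rintro _ ⟨b, rfl⟩
    simp [hIic, Measure.restrict_apply, Iic_inter_Ici]

lemma map_fst_norm_sq_volume_axialSpace :
    (volume : Measure AxialSpace).map (fun p ↦ (p.fst, ‖p‖ ^ 2)) =
      ENNReal.ofReal π • volume.restrict {q : ℝ × ℝ | q.1 ^ 2 ≤ q.2} := by
  have hmeas : Measurable fun p : ℝ × ℂ ↦ (p.1, p.1 ^ 2 + ‖p.2‖ ^ 2) := by fun_prop
  have hfactor : (fun p : AxialSpace ↦ (p.fst, ‖p‖ ^ 2)) =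
      (fun p : ℝ × ℂ ↦ (p.1, p.1 ^ 2 + ‖p.2‖ ^ 2)) ∘ WithLp.ofLp := by
    ext p <;> simp [WithLp.prod_norm_sq_eq_of_L2]
  have hregion : MeasurableSet {q : ℝ × ℝ | q.1 ^ 2 ≤ q.2} :=
    measurableSet_le (by fun_prop) (by fun_prop)
  rw [hfactor, ← Measure.map_map hmeas (WithLp.volume_preserving_ofLp ℝ ℂ).measurable,
    (WithLp.volume_preserving_ofLp ℝ ℂ).map_eq]
  ext A hA
  rw [Measure.map_apply hmeas hA, Measure.smul_apply, Measure.restrict_apply hA, smul_eq_mul,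
    Measure.volume_eq_prod, Measure.volume_eq_prod, Measure.prod_apply (hmeas hA),
    Measure.prod_apply (hA.inter hregion),
    ← lintegral_const_mul _ (measurable_measure_prodMk_left (hA.inter hregion))]
  refine lintegral_congr fun z ↦ ?_
  have hslice : MeasurableSet {t : ℝ | (z, z ^ 2 + t) ∈ A} :=
    hA.preimage (by fun_prop : Measurable fun t : ℝ ↦ (z, z ^ 2 + t))
  calc volume {w : ℂ | (z, z ^ 2 + ‖w‖ ^ 2) ∈ A}
      = (volume : Measure ℂ).map (fun w ↦ ‖w‖ ^ 2) {t | (z, z ^ 2 + t) ∈ A} :=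
        (Measure.map_apply (by fun_prop) hslice).symm
    _ = ENNReal.ofReal π * volume ({t | (z, z ^ 2 + t) ∈ A} ∩ Ici 0) := by
        rw [map_norm_sq_volume_complex, Measure.smul_apply, Measure.restrict_apply hslice,
          smul_eq_mul]
    _ = ENNReal.ofReal π * volume (Prod.mk z ⁻¹' (A ∩ {q | q.1 ^ 2 ≤ q.2})) := by
        rw [← measure_preimage_add volume (z ^ 2) (Prod.mk z ⁻¹' _)]
        congr 2
        ext t
        simp

lemma volume_parabolic_sector (s : ℝ) :
    volume {q : ℝ × ℝ | (s * √q.2 ≤ q.1 ∧ q.2 < 1) ∧ q.1 ^ 2 ≤ q.2} =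
      ENNReal.ofReal (2 / 3) * ENNReal.ofReal (1 - max s (-1)) := by
  have hslice (t : ℝ) : volume {z : ℝ | (s * √t ≤ z ∧ t < 1) ∧ z ^ 2 ≤ t} =
      (Ico 0 1).indicator (fun t ↦ ENNReal.ofReal √t * ENNReal.ofReal (1 - max s (-1))) t := by
    by_cases ht : t ∈ Ico 0 1
    · have : {z : ℝ | (s * √t ≤ z ∧ t < 1) ∧ z ^ 2 ≤ t} = Icc (max s (-1) * √t) √t := by
        ext z
        simp [max_mul_of_nonneg, Real.sq_le ht.1, ht.2, and_assoc]
      rw [this, Real.volume_Icc, indicator_of_mem ht, ← ENNReal.ofReal_mul (Real.sqrt_nonneg t)]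
      ring_nf
    · rw [indicator_of_notMem ht]
      convert measure_empty (μ := (volume : Measure ℝ))
      refine eq_empty_of_forall_notMem fun z hz ↦ ht ⟨(sq_nonneg z).trans hz.2, hz.1.2⟩
  have hsqrt : ∫⁻ t in Ico (0 : ℝ) 1, ENNReal.ofReal √t = ENNReal.ofReal (2 / 3) := by
    rw [restrict_Ico_eq_restrict_Ioc, ← ofReal_integral_eq_lintegral_ofReal
      (Real.continuous_sqrt.intervalIntegrable 0 1).1 (ae_of_all _ Real.sqrt_nonneg),
      ← intervalIntegral.integral_of_le zero_le_one]
    simp_rw [Real.sqrt_eq_rpow]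
    rw [integral_rpow (by norm_num)]
    norm_num
  have hmeas : MeasurableSet {q : ℝ × ℝ | (s * √q.2 ≤ q.1 ∧ q.2 < 1) ∧ q.1 ^ 2 ≤ q.2} := by
    simp only [ofPred_and]
    exact ((measurableSet_le (by fun_prop) (by fun_prop)).inter
      (measurableSet_lt (by fun_prop) (by fun_prop))).inter
      (measurableSet_le (by fun_prop) (by fun_prop))
  rw [Measure.volume_eq_prod, Measure.prod_apply_symm hmeas]
  calc ∫⁻ t : ℝ, volume {z : ℝ | (s * √t ≤ z ∧ t < 1) ∧ z ^ 2 ≤ t}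
      = ∫⁻ t in Ico (0 : ℝ) 1, ENNReal.ofReal √t * ENNReal.ofReal (1 - max s (-1)) := by
        simp_rw [hslice]
        exact lintegral_indicator measurableSet_Ico _
    _ = ENNReal.ofReal (2 / 3) * ENNReal.ofReal (1 - max s (-1)) := by
        rw [lintegral_mul_const _ (by fun_prop), hsqrt]

lemma exists_linearIsometryEquiv_apply_eq {E F : Type*} [NormedAddCommGroup E]
    [InnerProductSpace ℝ E] [FiniteDimensional ℝ E] [NormedAddCommGroup F] [InnerProductSpace ℝ F]
    [FiniteDimensional ℝ F] (hEF : finrank ℝ E = finrank ℝ F) {x : E} {y : F} (hxy : ‖x‖ = ‖y‖) :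
    ∃ e : E ≃ₗᵢ[ℝ] F, e x = y := by
  let f : E ≃ₗᵢ[ℝ] F :=
    (stdOrthonormalBasis ℝ E).equiv (stdOrthonormalBasis ℝ F) (finCongr hEF)
  exact ⟨f.trans (ℝ ∙ (f x - y))ᗮ.reflection, Submodule.reflection_sub (by simpa using hxy)⟩

lemma toSphere_preimage_val_of_cone {E : Type*} [NormedAddCommGroup E] [NormedSpace ℝ E]
    [MeasurableSpace E] [BorelSpace E] (μ : Measure E) [NullSingletonClass μ] {C : Set E}
    (hC : MeasurableSet C) (hsmul : ∀ r : ℝ, 0 < r → ∀ p, r • p ∈ C ↔ p ∈ C) :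
    μ.toSphere (Subtype.val ⁻¹' C) = finrank ℝ E * μ (C ∩ Metric.ball 0 1) := by
  have hcone : Ioo (0 : ℝ) 1 •
      (Subtype.val '' (Subtype.val ⁻¹' C : Set (Metric.sphere (0 : E) 1))) =
        (C ∩ Metric.ball 0 1) \ {0} := by
    ext p
    simp only [Set.mem_smul, mem_image, mem_preimage]
    constructor
    · rintro ⟨r, hr, _, ⟨u, hu, rfl⟩, rfl⟩
      refine ⟨⟨(hsmul r hr.1 u).2 hu, ?_⟩, ?_⟩
      · simpa [norm_smul, abs_of_pos hr.1] using hr.2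
      · exact smul_ne_zero hr.1.ne' (ne_zero_of_mem_unit_sphere u)
    · rintro ⟨⟨hpC, hp⟩, hp0 : p ≠ 0⟩
      have hpos : 0 < ‖p‖ := norm_pos_iff.2 hp0
      refine ⟨‖p‖, ⟨hpos, by simpa using hp⟩, ‖p‖⁻¹ • p, ⟨⟨‖p‖⁻¹ • p, ?_⟩, ?_, rfl⟩, ?_⟩
      · simp [norm_smul, hpos.ne']
      · exact (hsmul _ (inv_pos.2 hpos) p).2 hpC
      · exact smul_inv_smul₀ hpos.ne' p
  rw [μ.toSphere_apply' (measurable_subtype_coe hC), hcone,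
    measure_sdiff_null (measure_singleton _)]

section Archimedes

variable {E : Type*} [NormedAddCommGroup E] [InnerProductSpace ℝ E]

lemma exists_linearIsometryEquiv_axialSpace (hE : finrank ℝ E = 3) {x : E} (hx : ‖x‖ = 1) :
    ∃ e : E ≃ₗᵢ[ℝ] AxialSpace, e x = WithLp.toLp 2 (1, 0) := by
  have : FiniteDimensional ℝ E := .of_finrank_pos (by omega)
  refine exists_linearIsometryEquiv_apply_eq ?_ (by simp [hx])
  rw [hE, (WithLp.linearEquiv 2 ℝ (ℝ × ℂ)).finrank_eq]
  simp

lemma fst_linearIsometryEquiv_axialSpace {e : E ≃ₗᵢ[ℝ] AxialSpace} {x : E}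
    (hex : e x = WithLp.toLp 2 (1, 0)) (p : E) : (e p).fst = ⟪x, p⟫ := by
  rw [← e.inner_map_map, hex]
  simp [WithLp.prod_inner_apply]

variable [FiniteDimensional ℝ E] [MeasurableSpace E] [BorelSpace E]

lemma map_inner_norm_sq_volume (hE : finrank ℝ E = 3) {x : E} (hx : ‖x‖ = 1) :
    (volume : Measure E).map (fun p ↦ (⟪x, p⟫, ‖p‖ ^ 2)) =
      ENNReal.ofReal π • volume.restrict {q : ℝ × ℝ | q.1 ^ 2 ≤ q.2} := by
  obtain ⟨e, hex⟩ := exists_linearIsometryEquiv_axialSpace hE hx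
  have hfactor : (fun p ↦ (⟪x, p⟫, ‖p‖ ^ 2)) = (fun p : AxialSpace ↦ (p.fst, ‖p‖ ^ 2)) ∘ e := by
    ext p <;> simp [fst_linearIsometryEquiv_axialSpace hex]
  rw [hfactor, ← Measure.map_map (by fun_prop) e.measurePreserving.measurable,
    e.measurePreserving.map_eq, map_fst_norm_sq_volume_axialSpace]

/-- Archimedes' hat-box theorem. -/
lemma map_inner_toSphere_volume (hE : finrank ℝ E = 3) {x : E} (hx : ‖x‖ = 1) :
    (volume : Measure E).toSphere.map (fun u : Metric.sphere (0 : E) 1 ↦ ⟪x, (u : E)⟫) =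
      ENNReal.ofReal (2 * π) • volume.restrict (Icc (-1) 1) := by
  have : Nontrivial E := Module.nontrivial_of_finrank_pos (R := ℝ) (by omega)
  refine Measure.ext_of_Ici _ _ fun s ↦ ?_
  have hcone : MeasurableSet {p : E | s * ‖p‖ ≤ ⟪x, p⟫} :=
    measurableSet_le (by fun_prop) (by fun_prop)
  have hpreimage : (fun u : Metric.sphere (0 : E) 1 ↦ ⟪x, (u : E)⟫) ⁻¹' Ici s =
      Subtype.val ⁻¹' {p : E | s * ‖p‖ ≤ ⟪x, p⟫} := by
    ext u
    simp
  have hsector : MeasurableSet {q : ℝ × ℝ | s * √q.2 ≤ q.1 ∧ q.2 < 1} := by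
    rw [ofPred_and]
    exact (measurableSet_le (by fun_prop) (by fun_prop)).inter
      (measurableSet_lt (by fun_prop) (by fun_prop))
  have hball : {p : E | s * ‖p‖ ≤ ⟪x, p⟫} ∩ Metric.ball 0 1 =
      (fun p ↦ (⟪x, p⟫, ‖p‖ ^ 2)) ⁻¹' {q : ℝ × ℝ | s * √q.2 ≤ q.1 ∧ q.2 < 1} := by
    ext p
    simp
  have hinterval : Ici s ∩ Icc (-1 : ℝ) 1 = Icc (max s (-1)) 1 := by
    ext c
    simp [and_assoc]
  have hconst : (3 : ENNReal) * (ENNReal.ofReal π * ENNReal.ofReal (2 / 3)) =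
      ENNReal.ofReal (2 * π) := by
    rw [← ENNReal.ofReal_ofNat 3, ← ENNReal.ofReal_mul pi_pos.le, ← ENNReal.ofReal_mul (by simp)]
    ring_nf
  rw [Measure.map_apply (by fun_prop) measurableSet_Ici, hpreimage,
    toSphere_preimage_val_of_cone _ hcone, hball, ← Measure.map_apply (by fun_prop) hsector,
    map_inner_norm_sq_volume hE hx, hE, Measure.smul_apply, Measure.smul_apply,
    Measure.restrict_apply hsector, Measure.restrict_apply measurableSet_Ici, smul_eq_mul,
    smul_eq_mul, ← ofPred_and, volume_parabolic_sector, hinterval, Real.volume_Icc,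
    ← hconst, Nat.cast_ofNat, mul_assoc, mul_assoc]
  intro r hr p
  simp [norm_smul, inner_smul_right, abs_of_pos hr, mul_left_comm s r, mul_le_mul_iff_right₀ hr]

end Archimedes

section Rotation

variable {E F : Type*} [NormedAddCommGroup E] [NormedSpace ℝ E] [NormedAddCommGroup F]
  [NormedSpace ℝ F]

/-- The action of a linear isometry on unit vectors. -/
def sphereMap (e : E ≃ₗᵢ[ℝ] F) (u : Metric.sphere (0 : E) 1) : Metric.sphere (0 : F) 1 :=
  ⟨e u, by simp⟩

lemma measurePreserving_sphereMap [MeasurableSpace E] [BorelSpace E] [MeasurableSpace F]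
    [BorelSpace F] {μ : Measure E} {ν : Measure F} {e : E ≃ₗᵢ[ℝ] F} (he : MeasurePreserving e μ ν) :
    MeasurePreserving (sphereMap e) μ.toSphere ν.toSphere := by
  have hmeas : Measurable (sphereMap e) := by
    unfold sphereMap
    fun_prop
  refine ⟨hmeas, Measure.ext fun A hA ↦ ?_⟩
  have hcone : Ioo (0 : ℝ) 1 • (Subtype.val '' (sphereMap e ⁻¹' A)) =
      e ⁻¹' (Ioo (0 : ℝ) 1 • (Subtype.val '' A)) := by
    ext p
    simp only [Set.mem_smul, mem_preimage, mem_image]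
    constructor
    · rintro ⟨r, hr, _, ⟨u, hu, rfl⟩, rfl⟩
      exact ⟨r, hr, _, ⟨_, hu, rfl⟩, (map_smul e r (u : E)).symm⟩
    · rintro ⟨r, hr, _, ⟨u, hu, rfl⟩, hp⟩
      refine ⟨r, hr, _, ⟨sphereMap e.symm u, ?_, rfl⟩, e.injective ?_⟩
      · simpa [sphereMap] using hu
      · simpa [sphereMap] using hp
  rw [Measure.map_apply hmeas hA, μ.toSphere_apply' (hmeas hA), ν.toSphere_apply' hA, hcone,
    he.measure_preimage_emb e.toHomeomorph.measurableEmbedding, e.toLinearEquiv.finrank_eq]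

end Rotation

section Average

variable {X T G : Type*} [MeasurableSpace X] [MeasurableSpace T] [NormedAddCommGroup G]
  {μ : Measure X} [SFinite μ] {ν : Measure T} [IsFiniteMeasure ν] {φ : T → X → X} {f : X → G}

lemma integrable_uncurry_comp_of_measurePreserving (hφ : Measurable φ.uncurry)
    (hpres : ∀ t, MeasurePreserving (φ t) μ μ) (hf : Integrable f μ) :
    Integrable (fun q : T × X ↦ f (φ q.1 q.2)) (ν.prod μ) :=
  ((MeasurePreserving.id ν).skew_product hφ
    (ae_of_all _ fun t ↦ (hpres t).map_eq)).integrable_comp_of_integrable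
      (g := fun q : T × X ↦ f q.2) (hf.comp_snd ν)

lemma integral_average_comp_of_measurePreserving [NeZero ν] [NormedSpace ℝ G] [CompleteSpace G]
    (hφ : Measurable φ.uncurry) (hpres : ∀ t, MeasurePreserving (φ t) μ μ) (hf : Integrable f μ) :
    ∫ u, ⨍ t, f (φ t u) ∂ν ∂μ = ∫ u, f u ∂μ := by
  have hint := integrable_uncurry_comp_of_measurePreserving (ν := ν) hφ hpres hf
  have hinv (t : T) : ∫ u, f (φ t u) ∂μ = ∫ u, f u ∂μ := by
    have hf' : AEStronglyMeasurable f (μ.map (φ t)) :=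
      (hpres t).map_eq.symm ▸ hf.aestronglyMeasurable
    rw [← integral_map (hpres t).aemeasurable hf', (hpres t).map_eq]
  simp_rw [average_eq, integral_smul]
  rw [← integral_prod_symm _ hint, integral_prod _ hint]
  simp_rw [hinv, ← average_eq]
  exact average_const ν _

end Average

/-- The logarithmic potential `U_μ(v) = ∫ log (1 / |v - u|) dμ(u)`. -/
def logPotential {X : Type*} [PseudoMetricSpace X] [MeasurableSpace X] (μ : Measure X)
    (v : X) : ℝ :=
  ∫ u, log (1 / dist v u) ∂μ

lemma log_norm_le_circleAverage_log_norm_mul_add (β : ℂ) {α : ℂ} (hα : α ≠ 0) :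
    log ‖α‖ ≤ circleAverage (fun z ↦ log ‖β * z + α‖) 0 1 := by
  rcases eq_or_ne β 0 with rfl | hβ
  · simp [circleAverage_const]
  · calc log ‖α‖ = log ‖β‖ + log ‖β⁻¹ * α‖ := by
          rw [← log_mul (by simpa) (by simp [hα, hβ]), ← norm_mul, mul_inv_cancel_left₀ hβ]
      _ ≤ log ‖β‖ + log⁺ ‖β⁻¹ * α‖ := by
          gcongr
          exact le_max_right _ _
      _ = circleAverage (fun z ↦ log ‖β * z + α‖) 0 1 := by
          rw [← Polynomial.logMahlerMeasure_C_mul_X_add_C hβ, Polynomial.logMahlerMeasure_def]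
          simp

section AxialRotation

variable {E : Type*} [NormedAddCommGroup E] [InnerProductSpace ℝ E]

/-- The rotation of `E` about its axis, in coordinates `e` that split off this axis, by the angle
that `z` represents. -/
def axialRotation (e : E ≃ₗᵢ[ℝ] AxialSpace) (z : Circle) : E ≃ₗᵢ[ℝ] E :=
  (e.trans (.withLpProdCongr 2 (.refl ℝ ℝ) (rotation z))).trans e.symm

variable {e : E ≃ₗᵢ[ℝ] AxialSpace} {x : E}

lemma axialRotation_apply (z : Circle) (u : E) :
    axialRotation e z u = e.symm (WithLp.toLp 2 ((e u).fst, z * (e u).snd)) := rfl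

lemma axialRotation_apply_axis (hex : e x = WithLp.toLp 2 (1, 0)) (z : Circle) :
    axialRotation e z x = x := by
  rw [axialRotation_apply, e.symm_apply_eq, hex]
  simp

lemma measurable_sphereMap_axialRotation [FiniteDimensional ℝ E] [MeasurableSpace E] [BorelSpace E]
    (e : E ≃ₗᵢ[ℝ] AxialSpace) :
    Measurable fun q : ℝ × Metric.sphere (0 : E) 1 ↦
      sphereMap (axialRotation e (Circle.exp q.1)) q.2 := by
  refine Continuous.measurable ?_
  simp only [sphereMap, axialRotation_apply]
  fun_prop

lemma dist_sq_of_norm_eq_one {u v : E} (hu : ‖u‖ = 1) (hv : ‖v‖ = 1) :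
    dist u v ^ 2 = 2 * (1 - ⟪u, v⟫) := by
  rw [dist_eq_norm, norm_sub_sq_real, hu, hv]
  ring

lemma inner_axialRotation (hex : e x = WithLp.toLp 2 (1, 0)) (z : Circle) (u v : E) :
    ⟪v, axialRotation e z u⟫ = ⟪x, v⟫ * ⟪x, u⟫ + (z * ((e u).snd * star (e v).snd)).re := by
  rw [← e.inner_map_map, axialRotation_apply, e.apply_symm_apply, WithLp.prod_inner_apply,
    ← fst_linearIsometryEquiv_axialSpace hex, ← fst_linearIsometryEquiv_axialSpace hex]
  simp [Complex.inner]
  ring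

lemma norm_snd_sq_of_norm_eq_one (hex : e x = WithLp.toLp 2 (1, 0)) {u : E} (hu : ‖u‖ = 1) :
    ‖(e u).snd‖ ^ 2 = 1 - ⟪x, u⟫ ^ 2 := by
  have := WithLp.prod_norm_sq_eq_of_L2 (e u)
  rw [e.norm_map, hu, fst_linearIsometryEquiv_axialSpace hex, norm_eq_abs, sq_abs] at this
  linarith

lemma exists_dist_axialRotation_eq (hex : e x = WithLp.toLp 2 (1, 0)) {u v : E} (hu : ‖u‖ = 1)
    (hv : ‖v‖ = 1) (hux : -x ≠ u) (hvx : x ≠ v) :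
    ∃ β : ℂ, ∀ z : Circle,
      dist v (axialRotation e z u) = ‖β * z + (dist x v * dist (-x) u / 2 : ℝ)‖ := by
  have hx : ‖x‖ = 1 := by simp [← e.norm_map, hex]
  set α : ℝ := dist x v * dist (-x) u / 2
  have hα : 0 < α := by
    have := dist_pos.2 hux
    have := dist_pos.2 hvx
    positivity
  have hαsq : α ^ 2 = (1 - ⟪x, v⟫) * (1 + ⟪x, u⟫) := by
    simp only [α]
    rw [div_pow, mul_pow, dist_sq_of_norm_eq_one hx hv,
      dist_sq_of_norm_eq_one (by simpa) hu, inner_neg_left]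
    ring
  let β : ℂ := -((e u).snd * star (e v).snd) / α
  have hβsq : ‖β‖ ^ 2 = (1 - ⟪x, u⟫) * (1 + ⟪x, v⟫) := by
    have : ‖β‖ ^ 2 * α ^ 2 = (1 - ⟪x, u⟫) * (1 + ⟪x, v⟫) * α ^ 2 := by
      rw [norm_div, norm_neg, norm_mul, norm_star, div_pow, mul_pow,
        norm_snd_sq_of_norm_eq_one hex hu, norm_snd_sq_of_norm_eq_one hex hv, Complex.norm_real,
        norm_eq_abs, sq_abs, div_mul_cancel₀ _ (by positivity), hαsq]
      ring
    exact mul_right_cancel₀ (by positivity) this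
  refine ⟨β, fun z ↦ ?_⟩
  have hcross : (β * z * α).re = -(z * ((e u).snd * star (e v).snd)).re := by
    rw [← Complex.neg_re]
    congr 1
    have : (α : ℂ) ≠ 0 := by exact_mod_cast hα.ne'
    simp only [β]
    field_simp
  rw [← sq_eq_sq₀ dist_nonneg (norm_nonneg _),
    dist_sq_of_norm_eq_one hv (by rw [LinearIsometryEquiv.norm_map, hu]), inner_axialRotation hex,
    Complex.sq_norm, Complex.normSq_add, ← Complex.sq_norm, ← Complex.sq_norm, Complex.conj_ofReal,
    hcross, norm_mul, Circle.norm_coe, mul_one, hβsq, Complex.norm_real, norm_eq_abs, sq_abs, hαsq]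
  ring

end AxialRotation

section Comparison

variable {E : Type*} [NormedAddCommGroup E] [InnerProductSpace ℝ E]

lemma average_log_inv_dist_axialRotation_le {e : E ≃ₗᵢ[ℝ] AxialSpace} {x u v : E}
    (hex : e x = WithLp.toLp 2 (1, 0)) (hu : ‖u‖ = 1) (hv : ‖v‖ = 1) (hux : -x ≠ u) (hvx : x ≠ v) :
    ⨍ θ in Ioc 0 (2 * π), log (1 / dist v (axialRotation e (Circle.exp θ) u)) ≤
      log (1 / dist x v) + log (1 / dist (-x) u) + log 2 := by
  obtain ⟨β, hβ⟩ := exists_dist_axialRotation_eq hex hu hv hux hvx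
  have hxv := dist_pos.2 hvx
  have hxu := dist_pos.2 hux
  set α : ℂ := ((dist x v * dist (-x) u / 2 : ℝ) : ℂ)
  have hα : ‖α‖ = dist x v * dist (-x) u / 2 := by
    rw [Complex.norm_real, norm_of_nonneg (by positivity)]
  calc ⨍ θ in Ioc 0 (2 * π), log (1 / dist v (axialRotation e (Circle.exp θ) u))
      = -circleAverage (fun z ↦ log ‖β * z + α‖) 0 1 := by
        rw [circleAverage_eq_intervalAverage, uIoc_of_le two_pi_pos.le, ← average_neg]
        simp [hβ, circleMap]
    _ ≤ -log ‖α‖ := by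
        gcongr
        exact log_norm_le_circleAverage_log_norm_mul_add β (by rw [← norm_pos_iff, hα]; positivity)
    _ = log (1 / dist x v) + log (1 / dist (-x) u) + log 2 := by
        rw [hα, log_div (by positivity) two_ne_zero, log_mul hxv.ne' hxu.ne', one_div, one_div,
          log_inv, log_inv]
        ring

variable [FiniteDimensional ℝ E] [MeasurableSpace E] [BorelSpace E]

/-- Compare `μ` with the unit point mass at `x`: the difference of the two potentials is largest at
the antipode of `x`. -/
lemma logPotential_le_of_axially_symmetric (hE : finrank ℝ E = 3)
    {μ : Measure (Metric.sphere (0 : E) 1)} [IsProbabilityMeasure μ] {x v : Metric.sphere (0 : E) 1}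
    (hμ : ∀ f : E ≃ₗᵢ[ℝ] E, f x = x → MeasurePreserving (sphereMap f) μ μ) (hnull : μ {-x} = 0)
    (hxv : x ≠ v) (hintv : Integrable (fun u ↦ log (1 / dist v u)) μ)
    (hintx : Integrable (fun u ↦ log (1 / dist (-x) u)) μ) :
    logPotential μ v ≤ log (1 / dist x v) + logPotential μ (-x) + log 2 := by
  obtain ⟨e, hex⟩ := exists_linearIsometryEquiv_axialSpace hE (norm_eq_of_mem_sphere x)
  let φ (θ : ℝ) : Metric.sphere (0 : E) 1 → Metric.sphere (0 : E) 1 :=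
    sphereMap (axialRotation e (Circle.exp θ))
  have hφ : Measurable φ.uncurry := measurable_sphereMap_axialRotation e
  have hpres (θ : ℝ) : MeasurePreserving (φ θ) μ μ := hμ _ (axialRotation_apply_axis hex _)
  have : NeZero (volume.restrict (Ioc 0 (2 * π))) := ⟨by simp [pi_pos]⟩
  rw [logPotential, ← integral_average_comp_of_measurePreserving
    (ν := volume.restrict (Ioc 0 (2 * π))) hφ hpres hintv]
  have hintbound : Integrable (fun u ↦ log (1 / dist x v) + log (1 / dist (-x) u) + log 2) μ := by
    fun_prop
  calc ∫ u, (⨍ θ in Ioc 0 (2 * π), log (1 / dist v (φ θ u))) ∂μ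
      ≤ ∫ u, (log (1 / dist x v) + log (1 / dist (-x) u) + log 2) ∂μ := by
        refine integral_mono_ae ?_ hintbound ?_
        · simp_rw [average_eq]
          exact (integrable_uncurry_comp_of_measurePreserving (ν := volume.restrict (Ioc 0 (2 * π)))
            hφ hpres hintv).integral_prod_right.const_mul _
        · filter_upwards [compl_mem_ae_iff.2 hnull] with u hu
          exact average_log_inv_dist_axialRotation_le hex (norm_eq_of_mem_sphere u)
            (norm_eq_of_mem_sphere v) (fun h ↦ hu (Subtype.ext h.symm)) (Subtype.coe_ne_coe.2 hxv)
    _ = log (1 / dist x v) + logPotential μ (-x) + log 2 := by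
        rw [integral_add (by fun_prop) (by fun_prop), integral_add (by fun_prop) hintx]
        simp [logPotential]

end Comparison

section Sigma

lemma map_inner_surf (x : S2) :
    surf.map (fun u : S2 ↦ ⟪(x : E3), (u : E3)⟫) =
      ENNReal.ofReal (2 * π) • volume.restrict (Icc (-1) 1) :=
  map_inner_toSphere_volume finrank_euclideanSpace_fin (norm_eq_of_mem_sphere x)

lemma surf_univ : surf univ = ENNReal.ofReal (4 * π) := by
  let x : S2 := ⟨EuclideanSpace.single 0 1, by simp⟩
  calc surf univ = surf.map (fun u : S2 ↦ ⟪(x : E3), (u : E3)⟫) univ := by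
        rw [Measure.map_apply (by fun_prop) .univ, preimage_univ]
    _ = ENNReal.ofReal (4 * π) := by
        rw [map_inner_surf, Measure.smul_apply, Measure.restrict_apply_univ, Real.volume_Icc,
          smul_eq_mul, ← ENNReal.ofReal_mul (by positivity)]
        ring_nf

lemma map_inner_sigma2 (x : S2) :
    sigma2.map (fun u : S2 ↦ ⟪(x : E3), (u : E3)⟫) =
      (2⁻¹ : ENNReal) • volume.restrict (Icc (-1) 1) := by
  rw [sigma2, Measure.map_smul, map_inner_surf, surf_univ, smul_smul,
    ← ENNReal.ofReal_inv_of_pos (by positivity), ← ENNReal.ofReal_mul (by positivity),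
    ← ENNReal.ofReal_ofNat 2, ← ENNReal.ofReal_inv_of_pos two_pos]
  congr 2
  field_simp
  norm_num

lemma sigma2_singleton (x : S2) : sigma2 {x} = 0 := by
  refine measure_mono_null (t := (fun u : S2 ↦ ⟪(x : E3), (u : E3)⟫) ⁻¹' {1}) (by simp) ?_
  rw [← Measure.map_apply (by fun_prop) (measurableSet_singleton _), map_inner_sigma2]
  simp

lemma measurePreserving_sphereMap_sigma2 (f : E3 ≃ₗᵢ[ℝ] E3) :
    MeasurePreserving (sphereMap f) sigma2 sigma2 :=
  (measurePreserving_sphereMap f.measurePreserving).smul_measure _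

lemma log_inv_dist_eq (u v : S2) :
    log (1 / dist u v) = -(log (2 * (1 - ⟪(u : E3), (v : E3)⟫)) / 2) := by
  rw [← dist_sq_of_norm_eq_one (norm_eq_of_mem_sphere u) (norm_eq_of_mem_sphere v), one_div,
    log_inv, log_pow, Subtype.dist_eq]
  norm_num

lemma integrable_log_inv_dist_sigma2 (v : S2) : Integrable (fun u ↦ log (1 / dist v u)) sigma2 := by
  have hlog : IntervalIntegrable (fun c ↦ log (2 * (1 - c))) volume (-1) 1 := by
    have := (intervalIntegral.intervalIntegrable_log' (a := 4) (b := 0)).comp_mul_left (c := 2)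
    have := this.comp_sub_left 1
    norm_num at this
    exact this
  have hheight : Integrable (fun c ↦ -(log (2 * (1 - c)) / 2))
      (sigma2.map (fun u : S2 ↦ ⟪(v : E3), (u : E3)⟫)) := by
    rw [map_inner_sigma2]
    exact (((intervalIntegrable_iff_integrableOn_Icc_of_le (by norm_num)).1 hlog).div_const
      2).neg.smul_measure (by simp)
  exact (hheight.comp_measurable (by fun_prop)).congr
    (ae_of_all _ fun u ↦ (log_inv_dist_eq v u).symm)

lemma integrable_log_inv_dist_sigma2_prod :
    Integrable (fun q : S2 × S2 ↦ log (1 / dist q.1 q.2)) (sigma2.prod sigma2) := by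
  refine (integrable_prod_iff ?_).2 ⟨ae_of_all _ integrable_log_inv_dist_sigma2, ?_⟩
  · have : Measurable fun q : S2 × S2 ↦ log (1 / dist q.1 q.2) := by fun_prop
    exact this.aestronglyMeasurable
  · have hconst (u : S2) : ∫ v, ‖log (1 / dist u v)‖ ∂sigma2 =
        ∫ c, ‖-(log (2 * (1 - c)) / 2)‖ ∂((2⁻¹ : ENNReal) • volume.restrict (Icc (-1) 1)) := by
      have : Measurable fun c ↦ ‖-(log (2 * (1 - c)) / 2)‖ := by fun_prop
      rw [← map_inner_sigma2 u, integral_map (by fun_prop) this.aestronglyMeasurable]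
      simp_rw [log_inv_dist_eq]
    simp_rw [hconst]
    exact integrable_const _

end Sigma

section Cap

variable {a : ℝ}

lemma cap_eq_preimage_Ici (x : S2) (ha : a ∈ Icc 0 π) :
    cap x a = (fun u : S2 ↦ ⟪(x : E3), (u : E3)⟫) ⁻¹' Ici (cos a) := by
  ext u
  have hu := abs_le.1 (abs_real_inner_le_norm (x : E3) (u : E3))
  rw [norm_eq_of_mem_sphere, norm_eq_of_mem_sphere, one_mul] at hu
  calc dg x u ≤ a ↔ cos a ≤ cos (dg x u) :=
        (strictAntiOn_cos.le_iff_ge ha ⟨arccos_nonneg _, arccos_le_pi _⟩).symm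
    _ ↔ cos a ≤ ⟪(x : E3), (u : E3)⟫ := by rw [dg, cos_arccos hu.1 hu.2]

lemma measurableSet_cap (x : S2) (a : ℝ) : MeasurableSet (cap x a) :=
  measurableSet_le (by unfold dg; fun_prop) measurable_const

lemma setIntegral_cap_comp_inner {h : ℝ → ℝ} (hh : Measurable h) (x : S2) (ha : a ∈ Icc 0 π) :
    ∫ u in cap x a, h ⟪(x : E3), (u : E3)⟫ ∂sigma2 = 2⁻¹ * ∫ c in cos a..1, h c := by
  have hinter : Ici (cos a) ∩ Icc (-1) 1 = Icc (cos a) 1 := by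
    ext c
    simpa [neg_one_le_cos] using fun h _ ↦ (neg_one_le_cos a).trans h
  rw [cap_eq_preimage_Ici x ha, ← setIntegral_map measurableSet_Ici hh.aestronglyMeasurable
    (by fun_prop), map_inner_sigma2, Measure.restrict_smul, integral_smul_measure,
    Measure.restrict_restrict measurableSet_Ici, hinter, integral_Icc_eq_integral_Ioc,
    ← intervalIntegral.integral_of_le (cos_le_one a)]
  simp

lemma sigma2_real_cap (x : S2) (ha : a ∈ Icc 0 π) :
    sigma2.real (cap x a) = (1 - cos a) / 2 := by
  have := setIntegral_cap_comp_inner (h := fun _ ↦ 1) measurable_const x ha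
  simp only [setIntegral_const, smul_eq_mul, mul_one, intervalIntegral.integral_const] at this
  rw [this]
  ring

/-- The uniform probability measure on the spherical cap `B(x, a)`. -/
def capMeasure (x : S2) (a : ℝ) : Measure S2 := ProbabilityTheory.cond sigma2 (cap x a)

lemma integral_capMeasure (f : S2 → ℝ) (x : S2) (a : ℝ) :
    ∫ u, f u ∂capMeasure x a = (sigma2.real (cap x a))⁻¹ * ∫ u in cap x a, f u ∂sigma2 := by
  rw [capMeasure, ProbabilityTheory.cond, integral_smul_measure, ENNReal.toReal_inv, smul_eq_mul,
    measureReal_def]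

lemma cos_lt_one_of_mem_Ioo (ha : a ∈ Ioo 0 π) : cos a < 1 :=
  cos_zero ▸ cos_lt_cos_of_nonneg_of_le_pi le_rfl ha.2.le ha.1

lemma sigma2_cap_ne_zero (x : S2) (ha : a ∈ Ioo 0 π) : sigma2 (cap x a) ≠ 0 := by
  rw [← measureReal_ne_zero_iff, sigma2_real_cap x (Ioo_subset_Icc_self ha)]
  linarith [cos_lt_one_of_mem_Ioo ha]

lemma isProbabilityMeasure_capMeasure (x : S2) (ha : a ∈ Ioo 0 π) :
    IsProbabilityMeasure (capMeasure x a) :=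
  ProbabilityTheory.cond_isProbabilityMeasure (sigma2_cap_ne_zero x ha)

lemma capMeasure_singleton (x y : S2) (a : ℝ) : capMeasure x a {y} = 0 :=
  ProbabilityTheory.cond_absolutelyContinuous (sigma2_singleton y)

lemma measurePreserving_sphereMap_capMeasure {f : E3 ≃ₗᵢ[ℝ] E3} {x : S2} (hf : f x = x) (a : ℝ) :
    MeasurePreserving (sphereMap f) (capMeasure x a) (capMeasure x a) := by
  have hcap : sphereMap f ⁻¹' cap x a = cap x a := by
    ext u
    have : dg x (sphereMap f u) = dg x u := by
      rw [dg, dg, ← f.inner_map_map x u, hf]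
      rfl
    exact Iff.of_eq (congrArg (· ≤ a) this)
  have := (measurePreserving_sphereMap_sigma2 f).restrict_preimage (measurableSet_cap x a)
  rw [hcap] at this
  exact this.smul_measure _

lemma integrable_capMeasure {f : S2 → ℝ} (hf : Integrable f sigma2) (x : S2) (ha : a ∈ Ioo 0 π) :
    Integrable f (capMeasure x a) :=
  hf.restrict.smul_measure (ENNReal.inv_ne_top.2 (sigma2_cap_ne_zero x ha))

lemma integrable_logPotential_capMeasure (x : S2) (a : ℝ) :
    Integrable (logPotential (capMeasure x a)) sigma2 := by
  have : Integrable (fun q : S2 × S2 ↦ log (1 / dist q.1 q.2))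
      (sigma2.prod (sigma2.restrict (cap x a))) := by
    rw [← Measure.restrict_univ (μ := sigma2), Measure.prod_restrict, Measure.restrict_univ]
    exact integrable_log_inv_dist_sigma2_prod.restrict
  unfold logPotential
  simp_rw [integral_capMeasure]
  exact this.integral_prod_left.const_mul _

lemma integral_log_two_mul_one_add (s : ℝ) :
    ∫ c in s..1, log (2 * (1 + c)) =
      2 * log 4 - (1 + s) * log (2 * (1 + s)) - (1 - s) := by
  have := intervalIntegral.integral_comp_mul_add (a := s) (b := 1) log (two_ne_zero' ℝ) 2
  calc ∫ c in s..1, log (2 * (1 + c)) = ∫ c in s..1, log (2 * c + 2) := by ring_nf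
    _ = 2⁻¹ * ∫ t in 2 * s + 2..4, log t := by
        rw [this]
        norm_num
    _ = 2 * log 4 - (1 + s) * log (2 * (1 + s)) - (1 - s) := by
        rw [integral_log]
        ring_nf

lemma integral_log_two_mul_one_add_cos (ha : a ∈ Ioo 0 π) :
    ∫ c in cos a..1, log (2 * (1 + c)) =
      (1 - cos a) * (2 * log 2 - 1 - 2 * cot (a / 2) ^ 2 * log (cos (a / 2))) := by
  have hcos : 0 < cos (a / 2) :=
    cos_pos_of_mem_Ioo ⟨by linarith [ha.1, pi_pos], by linarith [ha.2]⟩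
  have hsin : 0 < sin (a / 2) :=
    sin_pos_of_pos_of_lt_pi (by linarith [ha.1]) (by linarith [ha.2, pi_pos])
  have hone_add : 1 + cos a = 2 * cos (a / 2) ^ 2 := by
    rw [cos_sq, mul_div_cancel₀ a two_ne_zero]
    ring
  have hone_sub : 1 - cos a = 2 * sin (a / 2) ^ 2 := by
    rw [sin_sq]
    linarith
  have hlog : log (2 * (1 + cos a)) = 2 * (log 2 + log (cos (a / 2))) := by
    rw [hone_add, ← log_mul two_ne_zero hcos.ne', ← Nat.cast_two, ← log_pow]
    push_cast
    ring_nf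
  have hlog4 : log 4 = 2 * log 2 := by
    rw [show (4 : ℝ) = 2 ^ 2 by norm_num, log_pow, Nat.cast_two]
  rw [integral_log_two_mul_one_add, hlog, hlog4, hone_add, hone_sub, cot_eq_cos_div_sin]
  field_simp
  rw [sin_sq]
  ring

lemma logPotential_capMeasure_neg (x : S2) (ha : a ∈ Ioo 0 π) :
    logPotential (capMeasure x a) (-x) =
      1 / 2 + cot (a / 2) ^ 2 * log (cos (a / 2)) - log 2 := by
  have ha' := Ioo_subset_Icc_self ha
  have hcos : 1 - cos a ≠ 0 := sub_ne_zero.2 (cos_lt_one_of_mem_Ioo ha).ne'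
  have hmeas : Measurable fun c ↦ -(log (2 * (1 + c)) / 2) := by fun_prop
  have hheight (u : S2) : log (1 / dist (-x) u) = -(log (2 * (1 + ⟪(x : E3), (u : E3)⟫)) / 2) := by
    rw [log_inv_dist_eq, coe_neg_sphere, inner_neg_left, sub_neg_eq_add]
  simp_rw [logPotential, integral_capMeasure, hheight]
  rw [setIntegral_cap_comp_inner hmeas x ha', sigma2_real_cap x ha', intervalIntegral.integral_neg,
    intervalIntegral.integral_div, integral_log_two_mul_one_add_cos ha]
  field_simp
  ring

lemma logPotential_capMeasure_le {x v : S2} (hxv : x ≠ v) (ha : a ∈ Ioo 0 π) :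
    logPotential (capMeasure x a) v ≤
      log (1 / dist x v) + (1 / 2 + cot (a / 2) ^ 2 * log (cos (a / 2))) := by
  have := isProbabilityMeasure_capMeasure x ha
  calc logPotential (capMeasure x a) v
      ≤ log (1 / dist x v) + logPotential (capMeasure x a) (-x) + log 2 :=
        logPotential_le_of_axially_symmetric finrank_euclideanSpace_fin
          (fun f hf ↦ measurePreserving_sphereMap_capMeasure hf a) (capMeasure_singleton x (-x) a)
          hxv (integrable_capMeasure (integrable_log_inv_dist_sigma2 v) x ha)
          (integrable_capMeasure (integrable_log_inv_dist_sigma2 (-x)) x ha)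
    _ = log (1 / dist x v) + (1 / 2 + cot (a / 2) ^ 2 * log (cos (a / 2))) := by
        rw [logPotential_capMeasure_neg x ha]
        ring

end Cap

theorem cap_mutual_energy_le_general {a b : ℝ} (ha : a ∈ Ioo 0 π) (hb : b ∈ Ioo 0 π) {x y : S2}
    (hxy : x ≠ y) :
    (sigma2.real (cap x a) * sigma2.real (cap y b))⁻¹ *
      ∫ u in cap x a, ∫ v in cap y b, log (1 / dist u v) ∂sigma2 ∂sigma2 ≤
    log (1 / dist x y) + 1 + cot (a / 2) ^ 2 * log (cos (a / 2)) +
      cot (b / 2) ^ 2 * log (cos (b / 2)) := by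
  have := isProbabilityMeasure_capMeasure x ha
  have hinty := integrable_capMeasure (integrable_log_inv_dist_sigma2 y) x ha
  calc (sigma2.real (cap x a) * sigma2.real (cap y b))⁻¹ *
        ∫ u in cap x a, ∫ v in cap y b, log (1 / dist u v) ∂sigma2 ∂sigma2
      = ∫ u, logPotential (capMeasure y b) u ∂capMeasure x a := by
        simp only [logPotential, integral_capMeasure, integral_const_mul]
        ring
    _ ≤ ∫ u, (log (1 / dist y u) + (1 / 2 + cot (b / 2) ^ 2 * log (cos (b / 2))))
          ∂capMeasure x a := by
        refine integral_mono_ae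
          (integrable_capMeasure (integrable_logPotential_capMeasure y b) x ha)
          (hinty.add (integrable_const _)) ?_
        filter_upwards [compl_mem_ae_iff.2 (capMeasure_singleton x y a)] with u hu
        exact logPotential_capMeasure_le (Ne.symm hu) hb
    _ = logPotential (capMeasure x a) y + (1 / 2 + cot (b / 2) ^ 2 * log (cos (b / 2))) := by
        rw [integral_add hinty (integrable_const _)]
        simp [logPotential]
    _ ≤ log (1 / dist x y) + 1 + cot (a / 2) ^ 2 * log (cos (a / 2)) +
          cot (b / 2) ^ 2 * log (cos (b / 2)) := by
        linarith [logPotential_capMeasure_le hxy ha]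

/-- Upper bound for the mutual energy of the normalized uniform measures on two
spherical caps of geodesic radius `a ∈ (0, π/2)`. -/
theorem cap_mutual_energy_le (a : ℝ) (ha : a ∈ Set.Ioo 0 (π/2)) (x y : S2) (hxy : x ≠ y) :
    ((sigma2 (cap x a)).toReal ^ 2)⁻¹ *
      ∫ u in cap x a, ∫ v in cap y a, Real.log (1 / dist u v) ∂sigma2 ∂sigma2 ≤
    Real.log (1 / dist x y) + 1 + 2 * Real.cot (a/2) ^ 2 * Real.log (Real.cos (a/2)) := by
  have ha' : a ∈ Ioo 0 π := ⟨ha.1, ha.2.trans (half_lt_self pi_pos)⟩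
  have h := cap_mutual_energy_le_general ha' ha' hxy
  have hcap : sigma2.real (cap y a) = sigma2.real (cap x a) := by
    rw [sigma2_real_cap y (Ioo_subset_Icc_self ha'), sigma2_real_cap x (Ioo_subset_Icc_self ha')]
  rw [hcap] at h
  rw [sq, ← measureReal_def]
  linarith
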